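/- (Multivariate BCH bound) Let C be a nonzero abelian code in A_q(r_1,…,r_s) with defining set D_α(C) for some α ∈ U, and let M be the q-orbits hypermatrix afforded by D_α(C). Suppose there exist a subset γ ⊆ {1,…,s} and integers δ_k ≥ 2 for k ∈ γ such that for each k ∈ γ there is a list j_{(k,0)},…,j_{(k,δ_k−2)} of consecutive integers modulo r_k with H_M(k,j_{(k,i)}) = 0 for all i = 0,…,δ_k−2. Then d_α*(C) ≥ ∏_{k∈γ} δ_k, and hence d*(C) ≥ ∏_{k∈γ} δ_k. -/

import Mathlib

open Classical

noncomputable section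

namespace AbelianCodes

/-- The index set `I = Z_{r 0} × ⋯ × Z_{r (s-1)}`. -/
abbrev Idx {s : ℕ} (r : Fin s → ℕ) : Type := ∀ k, ZMod (r k)

variable {F : Type*} [Field F]

/-- The support of a hypermatrix. -/
def hsupp {s : ℕ} {r : Fin s → ℕ} (M : Idx r → F) : Set (Idx r) := {i | M i ≠ 0}

/-- The hypercolumn `H_M(k,b)` of a hypermatrix, viewed as an `(s-1)`-dimensional
hypermatrix indexed by `∏_{j ≠ k} Z_{r j}`. -/
def hypercol {s : ℕ} {r : Fin (s+1) → ℕ} (M : Idx r → F) (k : Fin (s+1)) (b : ZMod (r k)) :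
    Idx (fun j => r (k.succAbove j)) → F :=
  fun i => M (k.insertNth b i)

/-- `ω_M(k,b)`: the number of consecutive zero hypercolumns
`H_M(k,b+1), H_M(k,b+2), …` (indices modulo `r k`). -/
def runLen {s : ℕ} {r : Fin (s+1) → ℕ} (M : Idx r → F) (k : Fin (s+1)) (b : ZMod (r k)) : ℕ :=
  ((Finset.Ico 1 (r k)).filter
    (fun j => ∀ m : ℕ, m ∈ Finset.Icc 1 j → hypercol M k (b + (m : ZMod (r k))) = 0)).card

/-- The apparent distance `d*(M)` of a hypermatrix, defined recursively on the
number of variables.  (A `0`-dimensional hypermatrix is a scalar, of apparent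
distance `1` if nonzero and `0` otherwise; with this convention the `1`-dimensional
case becomes `max {ω_M(b)+1 : a_b ≠ 0}` and the higher-dimensional case becomes
`max_k max {(ω_M(k,b)+1)·d*(H_M(k,b)) : H_M(k,b) ≠ 0}`, since zero hypermatrices
have apparent distance `0`.) -/
def apd : {s : ℕ} → (r : Fin s → ℕ) → (Idx r → F) → ℕ
  | 0, _, M => if M finZeroElim = 0 then 0 else 1
  | _+1, r, M =>
      Finset.univ.sup fun k =>
        Finset.univ.sup fun b : Fin (r k) =>
          (runLen M k ((b : ℕ) : ZMod (r k)) + 1) *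
            apd (fun j => r (k.succAbove j)) (hypercol M k ((b : ℕ) : ZMod (r k)))

/-- The `q^t`-orbit `Q_t(a)` of `a ∈ I`. -/
def qOrbit {s : ℕ} (r : Fin s → ℕ) (q t : ℕ) (a : Idx r) : Set (Idx r) :=
  {i | ∃ n : ℕ, ∀ k, i k = (q : ZMod (r k)) ^ (t * n) * a k}

/-- `D` is a union of `q^t`-orbits. -/
def OrbitUnion {s : ℕ} (r : Fin s → ℕ) (q t : ℕ) (D : Set (Idx r)) : Prop :=
  ∀ a ∈ D, qOrbit r q t a ⊆ D

/-- The hypermatrix afforded by `D ⊆ I`: entry `0` at indices in `D`, entry `1` elsewhere. -/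
def afforded {s : ℕ} (r : Fin s → ℕ) (D : Set (Idx r)) : Idx r → F :=
  fun i => if i ∈ D then 0 else 1

/-- `M` is a `q^t`-orbits hypermatrix, i.e. the hypermatrix afforded by some union
of `q^t`-orbits. -/
def IsOrbitMx {s : ℕ} (r : Fin s → ℕ) (q t : ℕ) (M : Idx r → F) : Prop :=
  ∃ D : Set (Idx r), OrbitUnion r q t D ∧ M = afforded r D

/-- The minimum apparent distance `mad(M) = min {d*(P) : P a q^t-orbits hypermatrix,
`0 ≠ P ≤ M`}`, where `P ≤ M` means `supp P ⊆ supp M`. -/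
def mad {s : ℕ} (r : Fin s → ℕ) (q t : ℕ) (M : Idx r → F) : ℕ :=
  sInf {d | ∃ P : Idx r → F, IsOrbitMx r q t P ∧ P ≠ 0 ∧ hsupp P ⊆ hsupp M ∧ apd r P = d}

/-- The `q^t`-cyclotomic coset of `b` modulo `r`. -/
def cycCoset (r q t : ℕ) (b : ZMod r) : Set (ZMod r) :=
  {x | ∃ n : ℕ, x = (q : ZMod r) ^ (t * n) * b}



variable {F : Type*} [Field F] {L : Type*} [Field L] [Algebra F L]

/-- An abelian code: a subspace of the group algebra `F[∏ Z_{r k}]` (identified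
with the space of coefficient functions `I → F`) which is closed under all
translations, i.e. an ideal. -/
def IsAbelianCode {s : ℕ} {r : Fin s → ℕ} (C : Submodule F (Idx r → F)) : Prop :=
  ∀ f ∈ C, ∀ a : Idx r, (fun i => f (i - a)) ∈ C

/-- Convolution: the multiplication of the group algebra in the coefficient
function picture. -/
def conv {s : ℕ} {r : Fin s → ℕ} [∀ k, NeZero (r k)] (f g : Idx r → F) : Idx r → F :=
  fun i => ∑ u : Idx r, f u * g (i - u)

/-- The (discrete) Fourier transform `φ_{α,f}(j) = f(α^j)` of a coefficient
function `f : I → F` with respect to `α`, with values in the extension `L`. -/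
def fourier {s : ℕ} {r : Fin s → ℕ} [∀ k, NeZero (r k)] (α : Fin s → L) (f : Idx r → F) :
    Idx r → L :=
  fun j => ∑ i : Idx r, algebraMap F L (f i) * ∏ k, α k ^ ((i k).val * (j k).val)

/-- The Hamming weight of a codeword. -/
def wt {s : ℕ} {r : Fin s → ℕ} [∀ k, NeZero (r k)] (f : Idx r → F) : ℕ :=
  (Finset.univ.filter fun i : Idx r => f i ≠ 0).card

/-- The minimum distance of a code. -/
def dmin {s : ℕ} {r : Fin s → ℕ} [∀ k, NeZero (r k)] (C : Submodule F (Idx r → F)) : ℕ :=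
  sInf {w | ∃ f ∈ C, f ≠ (0 : Idx r → F) ∧ wt f = w}

/-- The defining set `D_α(C) = {a ∈ I : f(α^a) = 0 for all f ∈ C}`. -/
def defSet {s : ℕ} (r : Fin s → ℕ) [∀ k, NeZero (r k)] (α : Fin s → L)
    (C : Submodule F (Idx r → F)) : Set (Idx r) :=
  {a | ∀ f ∈ C, fourier α f a = 0}

/-- The apparent distance of a code `C` with respect to `α`:
`d_α*(C) = min {d*(M(φ_{α,e})) : 0 ≠ e = e² ∈ C}`. -/
def dStarAlpha {s : ℕ} (r : Fin s → ℕ) [∀ k, NeZero (r k)] (α : Fin s → L)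
    (C : Submodule F (Idx r → F)) : ℕ :=
  sInf {d | ∃ e, e ∈ C ∧ e ≠ (0 : Idx r → F) ∧ conv e e = e ∧ apd r (fourier α e) = d}

/-- The apparent distance of a code: `d*(C) = max {d_β*(C) : β ∈ U}`, where `U`
is the set of tuples of primitive roots of unity in `L`. -/
def dStarCode {s : ℕ} (r : Fin s → ℕ) [∀ k, NeZero (r k)] (L : Type*) [Field L] [Algebra F L]
    (C : Submodule F (Idx r → F)) : ℕ :=
  sSup {d | ∃ α : Fin s → L, (∀ k, IsPrimitiveRoot (α k) (r k)) ∧ dStarAlpha r α C = d}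

/-- The defining set of the multivariate BCH code `B_q(α,γ,δ,b)`:
`∪_{k∈γ} ∪_{l=0}^{δ_k−2} ∪_{i ∈ I(k, b_k+l)} Q(i)`. -/
def bchDefSet {s : ℕ} (r : Fin s → ℕ) (q : ℕ) (γ : Finset (Fin s)) (δ b : Fin s → ℕ) :
    Set (Idx r) :=
  ⋃ k ∈ γ, ⋃ l ∈ Finset.range (δ k - 1),
    ⋃ i ∈ {i : Idx r | i k = ((b k + l : ℕ) : ZMod (r k))}, qOrbit r q 1 i


/-!
The Fourier transform of a nonzero codeword is a nonzero hypermatrix that vanishes on the defining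
set, so it suffices to bound the apparent distance of a nonzero hypermatrix `M` that has, in each
direction `k`, a run of `d k - 1` consecutive zero hypercolumns. Walking backwards from such a run
to the first nonzero hypercolumn `H_M(k,b)` gives `ω_M(k,b) + 1 ≥ d k`; this hypercolumn inherits
the runs of `M` in the remaining directions, and induction on the number of directions gives
`∏ k, d k ≤ d*(M)`.

As `0` is the infimum of the empty set of natural numbers, the bound on `d_α*(C)` also needs a
nonzero idempotent in `C`. For a nonzero `f ∈ C`, multiplication by `f` is injective on the
finite-dimensional ideal generated by `f`, because the Fourier transform embeds the group algebra in
a power of `L`, which is reduced. It is therefore onto, and the preimage of `f` is the identity of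
that ideal.
-/

section Hypermatrix

variable {s : ℕ}

lemma hypercol_eq_zero_iff {r : Fin (s + 1) → ℕ} {M : Idx r → F} {k : Fin (s + 1)}
    {b : ZMod (r k)} : hypercol M k b = 0 ↔ ∀ x : Idx r, x k = b → M x = 0 := by
  constructor
  · rintro h x rfl
    simpa only [hypercol, Fin.insertNth_self_removeNth, Pi.zero_apply] using
      congrFun h (k.removeNth x)
  · exact fun h => funext fun y => h _ (Fin.insertNth_apply_same (α := fun k => ZMod (r k)) k b y)

lemma hypercol_afforded_eq_zero_iff {r : Fin (s + 1) → ℕ} {D : Set (Idx r)} {k : Fin (s + 1)}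
    {b : ZMod (r k)} :
    hypercol (afforded r D : Idx r → F) k b = 0 ↔ ∀ x : Idx r, x k = b → x ∈ D := by
  simp only [hypercol_eq_zero_iff, afforded, ite_eq_left_iff, one_ne_zero, imp_false, not_not]

lemma exists_hypercol_ne_zero {r : Fin (s + 1) → ℕ} {M : Idx r → F} (hM : M ≠ 0)
    (k : Fin (s + 1)) : ∃ b, hypercol M k b ≠ 0 := by
  obtain ⟨x, hx⟩ := Function.ne_iff.mp hM
  exact ⟨x k, fun h => hx (hypercol_eq_zero_iff.mp h x rfl)⟩

lemma exists_and_forall_not_add_of_run {n : ℕ} [NeZero n] {p : ZMod n → Prop} (hp : ∃ a, p a)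
    {d : ℕ} {j : ZMod n} (hj : ∀ m ∈ Finset.Ico 1 d, ¬p (j + m)) :
    ∃ b, p b ∧ ∀ m ∈ Finset.Ico 1 d, ¬p (b + m) := by
  have hback : ∃ t : ℕ, p (j - t) := by
    obtain ⟨a, ha⟩ := hp
    exact ⟨(j - a).val, by rwa [ZMod.natCast_zmod_val, sub_sub_cancel]⟩
  refine ⟨j - Nat.find hback, Nat.find_spec hback, fun m hm => ?_⟩
  rw [Finset.mem_Ico] at hm
  rcases le_or_gt m (Nat.find hback) with hle | hlt
  · have h := Nat.find_min hback (m := Nat.find hback - m) (by omega)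
    rwa [Nat.cast_sub hle, ← sub_add] at h
  · have h := hj (m - Nat.find hback) (Finset.mem_Ico.mpr (by omega))
    rwa [Nat.cast_sub hlt.le, ← add_sub_assoc, add_sub_right_comm] at h

lemma le_runLen_add_one {r : Fin (s + 1) → ℕ} {M : Idx r → F} {k : Fin (s + 1)} [NeZero (r k)]
    {b : ZMod (r k)} {d : ℕ} (hb : hypercol M k b ≠ 0)
    (h : ∀ m ∈ Finset.Ico 1 d, hypercol M k (b + (m : ZMod (r k))) = 0) :
    d ≤ runLen M k b + 1 := by
  have hd : d ≤ r k := by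
    by_contra! hlt
    exact hb (by simpa using h (r k) (Finset.mem_Ico.mpr ⟨NeZero.one_le, hlt⟩))
  have hsub : Finset.Ico 1 d ⊆ (Finset.Ico 1 (r k)).filter fun l =>
      ∀ m : ℕ, m ∈ Finset.Icc 1 l → hypercol M k (b + (m : ZMod (r k))) = 0 := by
    intro l hl
    simp only [Finset.mem_Ico, Finset.mem_filter, Finset.mem_Icc] at hl h ⊢
    exact ⟨⟨hl.1, hl.2.trans_le hd⟩, fun m hm => h m ⟨hm.1, hm.2.trans_lt hl.2⟩⟩
  have hcard := Finset.card_le_card hsub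
  rw [Nat.card_Ico] at hcard
  exact Nat.sub_le_iff_le_add.mp hcard

lemma exists_hypercol_ne_zero_and_le_runLen {r : Fin (s + 1) → ℕ} {M : Idx r → F} (hM : M ≠ 0)
    {k : Fin (s + 1)} [NeZero (r k)] {d : ℕ} {j : ZMod (r k)}
    (h : ∀ i : ℕ, i + 1 < d → hypercol M k (j + (i : ZMod (r k))) = 0) :
    ∃ b, hypercol M k b ≠ 0 ∧ d ≤ runLen M k b + 1 := by
  have hshift : ∀ m ∈ Finset.Ico 1 d, ¬hypercol M k (j - 1 + (m : ZMod (r k))) ≠ 0 := by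
    intro m hm
    rw [Finset.mem_Ico] at hm
    have hzero := h (m - 1) (by omega)
    rwa [Nat.cast_sub hm.1, Nat.cast_one, ← add_sub_assoc, add_sub_right_comm, ← not_ne_iff]
      at hzero
  obtain ⟨b, hb, hrun⟩ := exists_and_forall_not_add_of_run (exists_hypercol_ne_zero hM k) hshift
  exact ⟨b, hb, le_runLen_add_one hb fun m hm => not_ne_iff.mp (hrun m hm)⟩

lemma mul_apd_hypercol_le_apd {r : Fin (s + 1) → ℕ} (M : Idx r → F) (k : Fin (s + 1))
    [NeZero (r k)] (b : ZMod (r k)) :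
    (runLen M k b + 1) * apd (fun l => r (k.succAbove l)) (hypercol M k b) ≤ apd r M := by
  have hb : (b.val : ZMod (r k)) = b := ZMod.natCast_zmod_val b
  rw [apd]
  refine le_trans ?_ (Finset.le_sup (Finset.mem_univ k))
  refine le_trans ?_ (Finset.le_sup (Finset.mem_univ (⟨b.val, ZMod.val_lt b⟩ : Fin (r k))))
  simp only [hb, le_refl]

theorem prod_le_apd {r : Fin s → ℕ} [∀ k, NeZero (r k)] {M : Idx r → F} (hM : M ≠ 0)
    {d : Fin s → ℕ} {j : ∀ k, ZMod (r k)}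
    (h : ∀ k, ∀ i : ℕ, i + 1 < d k → ∀ x : Idx r, x k = j k + (i : ZMod (r k)) → M x = 0) :
    ∏ k, d k ≤ apd r M := by
  induction s with
  | zero =>
    have hM0 : M finZeroElim ≠ 0 := fun h0 => hM (funext fun x => by
      rwa [Subsingleton.elim x finZeroElim])
    simp [apd, hM0]
  | succ s ih =>
    obtain ⟨b, hb, hrun⟩ := exists_hypercol_ne_zero_and_le_runLen hM (k := 0)
      fun i hi => hypercol_eq_zero_iff.mpr (h 0 i hi)
    have hcol : ∏ l, d (Fin.succAbove 0 l) ≤ apd _ (hypercol M 0 b) :=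
      ih hb (j := fun l => j (Fin.succAbove 0 l)) fun l i hi y hy =>
        h _ i hi _ ((Fin.insertNth_apply_succAbove (α := fun k => ZMod (r k)) 0 b y l).trans hy)
    calc ∏ k, d k = d 0 * ∏ l, d (Fin.succAbove 0 l) := Fin.prod_univ_succAbove d 0
      _ ≤ (runLen M 0 b + 1) * apd _ (hypercol M 0 b) := Nat.mul_le_mul hrun hcol
      _ ≤ apd r M := mul_apd_hypercol_le_apd M 0 b

end Hypermatrix

section Fourier

variable {s : ℕ} {r : Fin s → ℕ} [∀ k, NeZero (r k)] {α : Fin s → L}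

/-- The additive character `i ↦ (α^j)^i = ∏ k, α k ^ (i k * j k)` of the index group attached to
`j`, for a tuple `α` of roots of unity. The Fourier transform at `j` is the sum against it. -/
def character (hα : ∀ k, α k ^ r k = 1) (j : Idx r) : AddChar (Idx r) L where
  toFun i := ∏ k, α k ^ ((i k).val * (j k).val)
  map_zero_eq_one' := by simp only [Pi.zero_apply, ZMod.val_zero, zero_mul, pow_zero,
    Finset.prod_const_one]
  map_add_eq_mul' i i' := by
    rw [← Finset.prod_mul_distrib]
    refine Finset.prod_congr rfl fun k _ => ?_
    rw [pow_mul, pow_mul, pow_mul, ← mul_pow, ← pow_add, Pi.add_apply, ZMod.val_add,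
      ← pow_eq_pow_mod _ (hα k)]

lemma character_apply (hα : ∀ k, α k ^ r k = 1) (i j : Idx r) :
    character hα j i = ∏ k, α k ^ ((i k).val * (j k).val) := rfl

lemma character_swap (hα : ∀ k, α k ^ r k = 1) (i j : Idx r) :
    character hα j i = character hα i j := by
  simp only [character_apply, mul_comm]

lemma character_apply_single_one (hα : ∀ k, α k ^ r k = 1) (j : Idx r) (k : Fin s) :
    character hα j (Pi.single k 1) = α k ^ (j k).val := by
  rw [character_apply, Finset.prod_eq_single k (fun l _ hl => ?_) (by simp)]
  · rw [Pi.single_eq_same, ZMod.val_one_eq_one_mod, pow_mul, ← pow_eq_pow_mod _ (hα k), pow_one]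
  · rw [Pi.single_eq_of_ne hl, ZMod.val_zero, zero_mul, pow_zero]

lemma character_injective (hα : ∀ k, IsPrimitiveRoot (α k) (r k)) :
    Function.Injective (character fun k => (hα k).pow_eq_one) := by
  intro j j' h
  funext k
  have hpow := DFunLike.congr_fun h (Pi.single k 1)
  rw [character_apply_single_one, character_apply_single_one] at hpow
  exact ZMod.val_injective _ ((hα k).pow_inj (ZMod.val_lt _) (ZMod.val_lt _) hpow)

lemma linearIndependent_character (hα : ∀ k, IsPrimitiveRoot (α k) (r k)) :
    LinearIndependent L fun j : Idx r => (character (fun k => (hα k).pow_eq_one) j : Idx r → L) :=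
  (linearIndependent_monoidHom (Multiplicative (Idx r)) L).comp
    (fun j => (character (fun k => (hα k).pow_eq_one) j).toMonoidHom)
    (AddChar.toMonoidHomEquiv.injective.comp (character_injective hα))

lemma fourier_apply (hα : ∀ k, α k ^ r k = 1) (f : Idx r → F) (j : Idx r) :
    fourier α f j = ∑ i, algebraMap F L (f i) * character hα j i := rfl

lemma fourier_zero : fourier α (0 : Idx r → F) = 0 := by
  funext j
  simp only [fourier, Pi.zero_apply, map_zero, zero_mul, Finset.sum_const_zero]

lemma fourier_injective (hα : ∀ k, IsPrimitiveRoot (α k) (r k)) :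
    Function.Injective (fourier α : (Idx r → F) → Idx r → L) := by
  have hlin := (linearIndependent_character hα).fintypeLinearCombination_injective
  have hfourier : (fourier α : (Idx r → F) → Idx r → L) = fun f =>
      Fintype.linearCombination L
        (fun i => (character (fun k => (hα k).pow_eq_one) i : Idx r → L))
        (algebraMap F L ∘ f) := by
    funext f j
    simp only [fourier_apply fun k => (hα k).pow_eq_one, Fintype.linearCombination_apply,
      Finset.sum_apply, Pi.smul_apply, smul_eq_mul, Function.comp_apply, character_swap _ _ j]
  rw [hfourier]
  exact hlin.comp (algebraMap F L).injective.comp_left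

lemma fourier_ne_zero (hα : ∀ k, IsPrimitiveRoot (α k) (r k)) {f : Idx r → F} (hf : f ≠ 0) :
    fourier α f ≠ 0 :=
  fun h => hf (fourier_injective hα (h.trans fourier_zero.symm))

lemma fourier_conv (hα : ∀ k, α k ^ r k = 1) (f g : Idx r → F) :
    fourier α (conv f g) = fourier α f * fourier α g := by
  funext j
  simp only [Pi.mul_apply, fourier_apply hα, conv, map_sum, map_mul, Finset.sum_mul]
  rw [Finset.sum_comm]
  refine Finset.sum_congr rfl fun u _ => ?_
  rw [Finset.mul_sum, ← Equiv.sum_comp (Equiv.addRight u)]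
  refine Finset.sum_congr rfl fun i _ => ?_
  rw [Equiv.coe_addRight, add_sub_cancel_right, AddChar.map_add_eq_mul]
  ring

end Fourier

section Idempotent

variable {s : ℕ} {r : Fin s → ℕ} [∀ k, NeZero (r k)]

/-- Multiplication by `f` in the group algebra, as a linear map `g ↦ g * f`; its range is the ideal
generated by `f`. -/
def convRight (f : Idx r → F) : (Idx r → F) →ₗ[F] (Idx r → F) where
  toFun g := conv g f
  map_add' g g' := by
    funext i
    simp only [conv, Pi.add_apply, add_mul, Finset.sum_add_distrib]
  map_smul' c g := by
    funext i
    simp only [conv, Pi.smul_apply, smul_eq_mul, mul_assoc, Finset.mul_sum, RingHom.id_apply]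

lemma single_conv (f : Idx r → F) : conv (Pi.single 0 1) f = f := by
  funext i
  simp [conv, Pi.single_apply]

lemma conv_mem {C : Submodule F (Idx r → F)} (hC : IsAbelianCode C) (g : Idx r → F)
    {f : Idx r → F} (hf : f ∈ C) : conv g f ∈ C := by
  have hsum : conv g f = ∑ u, g u • fun i => f (i - u) := by
    funext i
    simp only [conv, Finset.sum_apply, Pi.smul_apply, smul_eq_mul]
  rw [hsum]
  exact C.sum_mem fun u _ => C.smul_mem _ (hC f hf u)

lemma conv_eq_zero_of_conv_conv_eq_zero {α : Fin s → L} (hα : ∀ k, IsPrimitiveRoot (α k) (r k))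
    {f g : Idx r → F} (h : conv (conv g f) f = 0) : conv g f = 0 := by
  have hsq := congrArg (fourier α) h
  simp only [fourier_conv fun k => (hα k).pow_eq_one, fourier_zero] at hsq
  apply fourier_injective hα
  rw [fourier_conv (fun k => (hα k).pow_eq_one), fourier_zero]
  funext j
  simpa using congrFun hsq j

lemma exists_conv_conv_eq_self {α : Fin s → L} (hα : ∀ k, IsPrimitiveRoot (α k) (r k))
    (f : Idx r → F) : ∃ g, conv (conv g f) f = f := by
  let mulOnIdeal : (convRight f).range →ₗ[F] (convRight f).range :=
    (convRight f).restrict fun g _ => LinearMap.mem_range_self _ g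
  have hinj : Function.Injective mulOnIdeal := by
    rw [injective_iff_map_eq_zero]
    rintro ⟨_, g, rfl⟩ h
    exact Subtype.ext (conv_eq_zero_of_conv_conv_eq_zero hα (congrArg Subtype.val h))
  obtain ⟨⟨_, g, rfl⟩, hg⟩ := LinearMap.surjective_of_injective hinj ⟨f, _, single_conv f⟩
  exact ⟨g, congrArg Subtype.val hg⟩

theorem exists_ne_zero_idempotent_mem {α : Fin s → L} (hα : ∀ k, IsPrimitiveRoot (α k) (r k))
    {C : Submodule F (Idx r → F)} (hC : IsAbelianCode C) (hC0 : C ≠ ⊥) :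
    ∃ e ∈ C, e ≠ 0 ∧ conv e e = e := by
  obtain ⟨f, hf, hf0⟩ := C.exists_mem_ne_zero_of_ne_bot hC0
  obtain ⟨g, hg⟩ := exists_conv_conv_eq_self hα f
  have hfourier : fourier α g * fourier α f * fourier α f = fourier α f := by
    simpa only [fourier_conv fun k => (hα k).pow_eq_one] using congrArg (fourier α) hg
  refine ⟨conv g f, conv_mem hC g hf, fun h0 => hf0 ?_, fourier_injective hα ?_⟩
  · rw [← hg, h0]
    exact map_zero (convRight f)
  · simp only [fourier_conv fun k => (hα k).pow_eq_one]
    rw [mul_left_comm, hfourier]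

end Idempotent

section ApparentDistance

variable {s : ℕ} {r : Fin s → ℕ} [∀ k, NeZero (r k)] {α : Fin s → L}

lemma le_dStarAlpha (hα : ∀ k, IsPrimitiveRoot (α k) (r k)) {C : Submodule F (Idx r → F)}
    (hC : IsAbelianCode C) (hC0 : C ≠ ⊥) {d : ℕ}
    (h : ∀ e ∈ C, e ≠ 0 → d ≤ apd r (fourier α e)) : d ≤ dStarAlpha r α C := by
  obtain ⟨e₀, he₀, he₀_ne, he₀_idem⟩ := exists_ne_zero_idempotent_mem hα hC hC0
  refine le_csInf ⟨_, e₀, he₀, he₀_ne, he₀_idem, rfl⟩ ?_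
  rintro _ ⟨e, he, he_ne, -, rfl⟩
  exact h e he he_ne

lemma dStarAlpha_le_dStarCode (hα : ∀ k, IsPrimitiveRoot (α k) (r k))
    (C : Submodule F (Idx r → F)) : dStarAlpha r α C ≤ dStarCode r L C := by
  have hfin : {β : Fin s → L | ∀ k, IsPrimitiveRoot (β k) (r k)}.Finite :=
    (Fintype.piFinset fun k => primitiveRoots (r k) L).finite_toSet.subset fun β hβ =>
      Fintype.mem_piFinset.mpr fun k => (mem_primitiveRoots (NeZero.pos (r k))).mpr (hβ k)
  exact le_csSup (hfin.image fun β => dStarAlpha r β C).bddAbove ⟨α, hα, rfl⟩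

end ApparentDistance

theorem multivariate_bch_bound_general
    {s : ℕ} (r : Fin (s + 1) → ℕ) [∀ k, NeZero (r k)]
    {F : Type*} [Field F] (L : Type*) [Field L] [Algebra F L]
    (α : Fin (s + 1) → L) (hα : ∀ k, IsPrimitiveRoot (α k) (r k))
    (C : Submodule F (Idx r → F)) (hC : IsAbelianCode C) (hC0 : C ≠ ⊥)
    (γ : Finset (Fin (s + 1))) (δ : Fin (s + 1) → ℕ) (j₀ : ∀ k, ZMod (r k))
    (hzero : ∀ k ∈ γ, ∀ i : ℕ, i + 1 < δ k →
      hypercol (afforded r (defSet r α C) : Idx r → L) k (j₀ k + (i : ZMod (r k))) = 0) :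
    (∏ k ∈ γ, δ k) ≤ dStarAlpha r α C ∧ (∏ k ∈ γ, δ k) ≤ dStarCode r L C := by
  suffices h : ∏ k ∈ γ, δ k ≤ dStarAlpha r α C from ⟨h, h.trans (dStarAlpha_le_dStarCode hα C)⟩
  refine le_dStarAlpha hα hC hC0 fun e he he_ne => ?_
  have hrun : ∀ k, ∀ i : ℕ, i + 1 < (if k ∈ γ then δ k else 1) → ∀ x : Idx r,
      x k = j₀ k + (i : ZMod (r k)) → fourier α e x = 0 := by
    intro k i hi x hx
    split_ifs at hi with hk
    · exact hypercol_afforded_eq_zero_iff.mp (hzero k hk i hi) x hx e he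
    · omega
  calc ∏ k ∈ γ, δ k = ∏ k, if k ∈ γ then δ k else 1 := by
        rw [Finset.prod_ite_mem, Finset.univ_inter]
    _ ≤ apd r (fourier α e) := prod_le_apd (fourier_ne_zero hα he_ne) hrun

/-- **multivariate BCH bound.** Let `C ≠ 0` be an abelian code with
defining set `D_α(C)` and `M = M(D_α(C))`.  Suppose there are `γ ⊆ {1,…,s}` and
integers `δ_k ≥ 2` (`k ∈ γ`) such that for each `k ∈ γ` there is a list
`j_{(k,0)},…,j_{(k,δ_k−2)}` of consecutive integers modulo `r_k` with
`H_M(k,j_{(k,i)}) = 0` for all `i`.  Then `d_α*(C) ≥ ∏_{k∈γ} δ_k` and hence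
`d*(C) ≥ ∏_{k∈γ} δ_k`. -/
theorem multivariate_bch_bound
    {s : ℕ} (r : Fin (s+1) → ℕ) [∀ k, NeZero (r k)]
    {F : Type*} [Field F] [Fintype F]
    (hcop : ∀ k, (Fintype.card F).Coprime (r k))
    (L : Type*) [Field L] [Algebra F L]
    (α : Fin (s+1) → L) (hα : ∀ k, IsPrimitiveRoot (α k) (r k))
    (C : Submodule F (Idx r → F)) (hC : IsAbelianCode C) (hC0 : C ≠ ⊥)
    (γ : Finset (Fin (s+1))) (δ : Fin (s+1) → ℕ) (hδ : ∀ k ∈ γ, 2 ≤ δ k)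
    (j₀ : ∀ k, ZMod (r k))
    (hzero : ∀ k ∈ γ, ∀ i : ℕ, i ≤ δ k - 2 →
      hypercol (afforded r (defSet r α C) : Idx r → L) k (j₀ k + (i : ZMod (r k))) = 0) :
    (∏ k ∈ γ, δ k) ≤ dStarAlpha r α C ∧ (∏ k ∈ γ, δ k) ≤ dStarCode r L C :=
  multivariate_bch_bound_general r L α hα C hC hC0 γ δ j₀ fun k hk i hi =>
    hzero k hk i (by omega)

end AbelianCodes
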